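/- Let f be the cost function f(U) = Σ_{ℓ=1}^L α_ℓ Σ_{k=1}^n |W^(ℓ)(U)_{k⋯k}|², where for each ℓ, W^(ℓ)(U)_{k₁⋯k_{d_ℓ}} = Σ_{a₁,…,a_{d_ℓ}} A^(ℓ)_{a₁⋯a_{d_ℓ}} ∏_{p=1}^{t_ℓ} conj(U_{a_p k_p}) ∏_{p=t_ℓ+1}^{d_ℓ} U_{a_p k_p}. Let {U_k} be a Jacobi-G sequence for f on U(n). Then every accumulation point U* of {U_k} is a stationary point of f restricted to U(n), i.e. ProjGrad f(U*) = 0. -/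

import Mathlib

open Matrix BigOperators Filter

/-- Frobenius norm of a square complex matrix (any size). -/
noncomputable def frobC {m : ℕ} (A : Matrix (Fin m) (Fin m) ℂ) : ℝ :=
  Real.sqrt (∑ i, ∑ j, Complex.normSq (A i j))

/-- `g` is the Euclidean gradient of `f : ℂ^{n×n} → ℝ` with respect to the real
inner product `⟨A,B⟩ = Re tr(Aᴴ B)`. -/
def IsGradC {n : ℕ} (f : Matrix (Fin n) (Fin n) ℂ → ℝ)
    (g : Matrix (Fin n) (Fin n) ℂ → Matrix (Fin n) (Fin n) ℂ) : Prop :=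
  ∀ U H, HasDerivAt (fun t : ℝ => f (U + t • H))
    (∑ i, ∑ j, ((starRingEnd ℂ) (g U i j) * H i j).re) 0

/-- Riemannian (projected) gradient on U(n): `U (Λ - Λᴴ)/2` with `Λ = Uᴴ ∇f(U)`. -/
noncomputable def projGradC {n : ℕ}
    (g : Matrix (Fin n) (Fin n) ℂ → Matrix (Fin n) (Fin n) ℂ)
    (U : Matrix (Fin n) (Fin n) ℂ) : Matrix (Fin n) (Fin n) ℂ :=
  U * ((1 / 2 : ℂ) • (Uᴴ * g U - (Uᴴ * g U)ᴴ))

/-- Plane transformation `G(i,j,Ψ)`: identity except that the 2×2 submatrix formed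
by rows and columns `(i,j)` equals `Ψ`. -/
noncomputable def planeG (n : ℕ) (i j : Fin n) (Ψ : Matrix (Fin 2) (Fin 2) ℂ) :
    Matrix (Fin n) (Fin n) ℂ :=
  fun a b =>
    if a = i ∧ b = i then Ψ 0 0
    else if a = i ∧ b = j then Ψ 0 1
    else if a = j ∧ b = i then Ψ 1 0
    else if a = j ∧ b = j then Ψ 1 1
    else if a = b then 1 else 0

/-- The 2×2 unitary matrix `Ψ(c,s₁,s₂) = [[c, −(s₁+is₂)], [s₁−is₂, c]]`. -/
noncomputable def PsiM (c s₁ s₂ : ℝ) : Matrix (Fin 2) (Fin 2) ℂ :=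
  !![(c : ℂ), -((s₁ : ℂ) + (s₂ : ℂ) * Complex.I);
     (s₁ : ℂ) - (s₂ : ℂ) * Complex.I, (c : ℂ)]

/-!
Put `Λ(V) = Vᴴ ∇f(V)`. Along a curve `V γ(τ)` with `γ(0) = 1` the derivative of `f` at `0` is
`⟨Λ(V), γ'(0)⟩`, so the gradient at `I₂` of `Ψ ↦ f (V G(i,j,Ψ))` is the `(i,j)` block of `Λ(V)`.
The values `f (U_k)` increase, hence stay below `f (U*)`. For each pair `(i,j)`, the matrices `V`
satisfying both `f (V G(i,j,Ψ)) ≤ f (U*)` for all rotations `Ψ` and the gradient inequality for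
`(i,j)` form a closed set; the finitely many such sets cover the iterates, so one of them contains
`U*`. For that pair, `1` maximizes `Ψ ↦ f (U* G(i,j,Ψ))` over rotations, and together with the
invariance of `f` under unit column phases this makes the block of `Λ(U*)` Hermitian. The gradient
inequality then forces `ProjGrad f(U*) = 0`.
-/

section

open scoped Matrix.Norms.Frobenius

section RealInner

variable {ι κ ν : Type*} [Fintype ι] [Fintype κ] [Fintype ν]

/-- The real inner product `⟨A, B⟩ = Re tr(Aᴴ B)` on complex matrices, with respect to which
gradients are taken. -/
noncomputable def reInner (A B : Matrix ι κ ℂ) : ℝ :=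
  (Aᴴ * B).trace.re

lemma sum_re_conj_mul_eq_reInner (A B : Matrix ι κ ℂ) :
    ∑ a, ∑ b, ((starRingEnd ℂ) (A a b) * B a b).re = reInner A B := by
  simp only [reInner, trace, diag_apply, mul_apply, conjTranspose_apply, Complex.re_sum,
    RCLike.star_def]
  exact Finset.sum_comm

lemma reInner_mul_left (A : Matrix ι κ ℂ) (V : Matrix ι ν ℂ) (X : Matrix ν κ ℂ) :
    reInner A (V * X) = reInner (Vᴴ * A) X := by
  simp only [reInner, conjTranspose_mul, conjTranspose_conjTranspose, Matrix.mul_assoc]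

lemma reInner_mul_right (A : Matrix ι κ ℂ) (X : Matrix ι ν ℂ) (V : Matrix ν κ ℂ) :
    reInner A (X * V) = reInner (A * Vᴴ) X := by
  simp only [reInner, conjTranspose_mul, conjTranspose_conjTranspose]
  rw [← Matrix.mul_assoc, trace_mul_comm, Matrix.mul_assoc]

lemma reInner_single [DecidableEq ι] [DecidableEq κ] (A : Matrix ι κ ℂ) (a : ι) (b : κ) (z : ℂ) :
    reInner A (single a b z) = (star (A a b) * z).re := by
  rw [reInner, trace_mul_single, conjTranspose_apply]
  simp [mul_comm]

lemma apply_eq_reInner_single [DecidableEq ι] [DecidableEq κ] (A : Matrix ι κ ℂ) (a : ι) (b : κ) :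
    A a b = reInner A (single a b 1) + reInner A (single a b Complex.I) * Complex.I := by
  rw [reInner_single, reInner_single]
  apply Complex.ext <;> simp

lemma ext_reInner {A B : Matrix ι κ ℂ} (h : ∀ H, reInner A H = reInner B H) : A = B := by
  classical
  ext a b
  rw [apply_eq_reInner_single A, apply_eq_reInner_single B, h, h]

end RealInner

lemma frobC_eq_norm {m : ℕ} (A : Matrix (Fin m) (Fin m) ℂ) : frobC A = ‖A‖ := by
  rw [frobC, frobenius_norm_def, Real.sqrt_eq_rpow]
  simp [Complex.normSq_eq_norm_sq]

lemma mapClusterPt_of_tendsto_frobC_sub {m : ℕ} {U : ℕ → Matrix (Fin m) (Fin m) ℂ}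
    {V : Matrix (Fin m) (Fin m) ℂ} {φ : ℕ → ℕ} (hφ : StrictMono φ)
    (h : Tendsto (fun k => frobC (U (φ k) - V)) atTop (nhds 0)) : MapClusterPt V atTop U := by
  simp only [frobC_eq_norm] at h
  exact (tendsto_iff_norm_sub_tendsto_zero.2 h).mapClusterPt.of_comp hφ.tendsto_atTop

section Gradient

variable {n : ℕ} {f : Matrix (Fin n) (Fin n) ℂ → ℝ}
  {g : Matrix (Fin n) (Fin n) ℂ → Matrix (Fin n) (Fin n) ℂ} {V : Matrix (Fin n) (Fin n) ℂ}

lemma IsGradC.fderiv_apply (hg : IsGradC f g) (hf : DifferentiableAt ℝ f V)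
    (H : Matrix (Fin n) (Fin n) ℂ) : fderiv ℝ f V H = reInner (g V) H := by
  rw [← sum_re_conj_mul_eq_reInner]
  exact (hf.hasFDerivAt.hasLineDerivAt H).unique (hg V H)

lemma IsGradC.continuous (hg : IsGradC f g) (hf : ContDiff ℝ 1 f) : Continuous g := by
  have hinner (H : Matrix (Fin n) (Fin n) ℂ) : Continuous fun V => reInner (g V) H := by
    simp only [← hg.fderiv_apply (hf.differentiable one_ne_zero _)]
    exact (hf.continuous_fderiv one_ne_zero).clm_apply continuous_const
  refine continuous_matrix fun a b => ?_
  simp only [apply_eq_reInner_single _ a b]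
  exact (Complex.continuous_ofReal.comp (hinner _)).add
    ((Complex.continuous_ofReal.comp (hinner _)).mul continuous_const)

lemma IsGradC.hasDerivAt_comp_mul (hg : IsGradC f g) (hf : DifferentiableAt ℝ f V)
    {γ : ℝ → Matrix (Fin n) (Fin n) ℂ} {X : Matrix (Fin n) (Fin n) ℂ}
    (hγ₀ : γ 0 = 1) (hγ : HasDerivAt γ X 0) :
    HasDerivAt (fun τ => f (V * γ τ)) (reInner (Vᴴ * g V) X) 0 := by
  rw [← reInner_mul_left, ← hg.fderiv_apply hf]
  have hfV : HasFDerivAt f (fderiv ℝ f V) (V * γ 0) := by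
    simpa only [hγ₀, Matrix.mul_one] using hf.hasFDerivAt
  exact hfV.comp_hasDerivAt 0 (hγ.const_mul V)

lemma IsGradC.reInner_eq_zero_of_forall_le (hg : IsGradC f g) (hf : DifferentiableAt ℝ f V)
    {γ : ℝ → Matrix (Fin n) (Fin n) ℂ} {X : Matrix (Fin n) (Fin n) ℂ}
    (hγ₀ : γ 0 = 1) (hγ : HasDerivAt γ X 0) (hmax : ∀ τ, f (V * γ τ) ≤ f V) :
    reInner (Vᴴ * g V) X = 0 := by
  refine IsLocalMax.hasDerivAt_eq_zero (Eventually.of_forall fun τ => ?_)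
    (hg.hasDerivAt_comp_mul hf hγ₀ hγ)
  simpa only [hγ₀, Matrix.mul_one] using hmax τ

lemma continuous_projGradC (hg : Continuous g) : Continuous (projGradC g) := by
  unfold projGradC
  fun_prop

end Gradient

section PhaseInvariance

/-- Invariance of `f` under multiplying each column of its argument by a phase, i.e. under right
multiplication by diagonal unitary matrices. -/
def PhaseInvariant {ι κ β : Type*} [Fintype κ] [DecidableEq κ] (f : Matrix ι κ ℂ → β) : Prop :=
  ∀ (V : Matrix ι κ ℂ) (w : κ → ℂ), (∀ k, ‖w k‖ = 1) → f (V * diagonal w) = f V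

lemma diagonal_update_one {κ R : Type*} [DecidableEq κ] [Ring R] (b : κ) (z : R) :
    diagonal (Function.update 1 b z) = 1 + (z - 1) • single b b 1 := by
  rw [← diagonal_single, ← diagonal_one, ← diagonal_smul, diagonal_add]
  congr 1
  ext a
  rcases eq_or_ne a b with rfl | hab
  · simp
  · simp [hab]

variable {n : ℕ} {f : Matrix (Fin n) (Fin n) ℂ → ℝ}
  {g : Matrix (Fin n) (Fin n) ℂ → Matrix (Fin n) (Fin n) ℂ} {V : Matrix (Fin n) (Fin n) ℂ}

lemma IsGradC.im_diag_eq_zero (hg : IsGradC f g) (hf : DifferentiableAt ℝ f V)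
    (hphase : PhaseInvariant f) (b : Fin n) : ((Vᴴ * g V) b b).im = 0 := by
  have hexp : HasDerivAt (fun τ : ℝ => Complex.exp (τ * Complex.I)) Complex.I 0 := by
    simpa using ((hasDerivAt_id (0 : ℝ)).ofReal_comp.mul_const Complex.I).cexp
  have hγ : HasDerivAt (fun τ : ℝ => diagonal (Function.update 1 b (Complex.exp (τ * Complex.I))))
      (single b b Complex.I) 0 := by
    simp only [diagonal_update_one]
    exact (((hexp.sub_const 1).smul_const (single b b (1 : ℂ))).const_add 1).congr_deriv (by simp)
  have hstat : reInner (Vᴴ * g V) (single b b Complex.I) = 0 := by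
    refine hg.reInner_eq_zero_of_forall_le hf (by simp) hγ fun τ =>
      (hphase V _ fun k => ?_).le
    rcases eq_or_ne k b with rfl | hkb
    · simp
    · simp [hkb]
  simpa [reInner_single] using hstat

end PhaseInvariance

section PlaneTransformation

variable {n : ℕ} {i j : Fin n}

/-- The inclusion of the coordinate plane `(i, j)`: the `n × 2` matrix with columns `e_i, e_j`. -/
def planeInclusion (i j : Fin n) : Matrix (Fin n) (Fin 2) ℂ :=
  (1 : Matrix (Fin n) (Fin n) ℂ).submatrix id ![i, j]

lemma planeInclusion_conjTranspose_mul_mul (i j : Fin n) (M : Matrix (Fin n) (Fin n) ℂ) :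
    (planeInclusion i j)ᴴ * M * planeInclusion i j = M.submatrix ![i, j] ![i, j] := by
  ext a b
  simp only [planeInclusion, mul_apply, conjTranspose_apply, submatrix_apply, one_apply]
  simp

lemma planeG_eq (hij : i ≠ j) (Ψ : Matrix (Fin 2) (Fin 2) ℂ) :
    planeG n i j Ψ = 1 + planeInclusion i j * (Ψ - 1) * (planeInclusion i j)ᴴ := by
  ext a b
  simp only [planeG, planeInclusion, Matrix.add_apply, mul_apply, Fin.sum_univ_two, submatrix_apply,
    conjTranspose_apply, one_apply, Matrix.sub_apply]
  by_cases hai : a = i <;> by_cases haj : a = j <;> by_cases hbi : b = i <;>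
    by_cases hbj : b = j <;> simp_all

lemma planeG_one (hij : i ≠ j) : planeG n i j 1 = 1 := by
  simp [planeG_eq hij]

lemma hasDerivAt_planeG (hij : i ≠ j) {M : ℝ → Matrix (Fin 2) (Fin 2) ℂ}
    {H : Matrix (Fin 2) (Fin 2) ℂ} {τ : ℝ} (hM : HasDerivAt M H τ) :
    HasDerivAt (fun τ => planeG n i j (M τ))
      (planeInclusion i j * H * (planeInclusion i j)ᴴ) τ := by
  let lift : Matrix (Fin 2) (Fin 2) ℂ →ₗ[ℝ] Matrix (Fin n) (Fin n) ℂ :=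
    { toFun := fun H => planeInclusion i j * H * (planeInclusion i j)ᴴ
      map_add' := fun H K => by rw [Matrix.mul_add, Matrix.add_mul]
      map_smul' := fun x H => by rw [Matrix.mul_smul, Matrix.smul_mul, RingHom.id_apply] }
  simp only [planeG_eq hij]
  exact (lift.toContinuousLinearMap.hasFDerivAt.comp_hasDerivAt τ (hM.sub_const 1)).const_add 1

variable {f : Matrix (Fin n) (Fin n) ℂ → ℝ}
  {g : Matrix (Fin n) (Fin n) ℂ → Matrix (Fin n) (Fin n) ℂ} {V : Matrix (Fin n) (Fin n) ℂ}

lemma reInner_planeInclusion_mul_mul (M : Matrix (Fin n) (Fin n) ℂ) (H : Matrix (Fin 2) (Fin 2) ℂ) :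
    reInner M (planeInclusion i j * H * (planeInclusion i j)ᴴ) =
      reInner (M.submatrix ![i, j] ![i, j]) H := by
  rw [reInner_mul_right, reInner_mul_left, conjTranspose_conjTranspose, ← Matrix.mul_assoc,
    planeInclusion_conjTranspose_mul_mul]

/-- `gh` is the Euclidean gradient at `I₂` of the restriction `h^{ij}_V(Ψ) = f (V G(i,j,Ψ))`. -/
def IsPlaneGradC (f : Matrix (Fin n) (Fin n) ℂ → ℝ) (V : Matrix (Fin n) (Fin n) ℂ) (i j : Fin n)
    (gh : Matrix (Fin 2) (Fin 2) ℂ) : Prop :=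
  ∀ H : Matrix (Fin 2) (Fin 2) ℂ,
    HasDerivAt (fun τ : ℝ => f (V * planeG n i j (1 + τ • H)))
      (∑ a, ∑ b, ((starRingEnd ℂ) (gh a b) * H a b).re) 0

lemma IsPlaneGradC.eq_submatrix {gh : Matrix (Fin 2) (Fin 2) ℂ} (h : IsPlaneGradC f V i j gh)
    (hg : IsGradC f g) (hf : DifferentiableAt ℝ f V) (hij : i ≠ j) :
    gh = (Vᴴ * g V).submatrix ![i, j] ![i, j] := by
  refine ext_reInner fun H => ?_
  have hline : HasDerivAt (fun τ : ℝ => 1 + τ • H) H 0 :=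
    (((hasDerivAt_id (0 : ℝ)).smul_const H).const_add 1).congr_deriv (one_smul ℝ H)
  have hderiv := hg.hasDerivAt_comp_mul hf (by simp [planeG_one hij]) (hasDerivAt_planeG hij hline)
  rw [← reInner_planeInclusion_mul_mul, ← sum_re_conj_mul_eq_reInner gh]
  exact (h H).unique hderiv

end PlaneTransformation

section Rotation

variable {n : ℕ} {f : Matrix (Fin n) (Fin n) ℂ → ℝ}
  {g : Matrix (Fin n) (Fin n) ℂ → Matrix (Fin n) (Fin n) ℂ} {V : Matrix (Fin n) (Fin n) ℂ}
  {i j : Fin n}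

lemma PsiM_one_zero_zero : PsiM 1 0 0 = 1 := by
  simp [PsiM, one_fin_two]

lemma PsiM_mul (c s x y : ℝ) : PsiM c (s * x) (s * y) = c • 1 + s • PsiM 0 x y := by
  ext a b
  fin_cases a <;> fin_cases b <;> simp [PsiM] <;> ring

lemma hasDerivAt_PsiM_cos_sin (x y : ℝ) :
    HasDerivAt (fun τ => PsiM (Real.cos τ) (Real.sin τ * x) (Real.sin τ * y)) (PsiM 0 x y) 0 := by
  simp only [PsiM_mul]
  exact (((Real.hasDerivAt_cos 0).smul_const 1).fun_add
    ((Real.hasDerivAt_sin 0).smul_const (PsiM 0 x y))).congr_deriv (by simp)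

lemma reInner_PsiM_zero (S : Matrix (Fin 2) (Fin 2) ℂ) (x y : ℝ) :
    reInner S (PsiM 0 x y) =
      x * ((S 1 0).re - (S 0 1).re) - y * ((S 1 0).im + (S 0 1).im) := by
  have hPsi : PsiM 0 x y = !![0, -(x + y * Complex.I); x - y * Complex.I, 0] := by simp [PsiM]
  rw [← sum_re_conj_mul_eq_reInner, hPsi]
  simp only [Fin.sum_univ_two, of_apply, cons_val', cons_val_zero, cons_val_one,
    cons_val_fin_one, Complex.zero_re, Complex.zero_im, Complex.mul_re, Complex.mul_im,
    Complex.conj_re, Complex.conj_im, Complex.neg_re, Complex.neg_im, Complex.add_re,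
    Complex.add_im, Complex.sub_re, Complex.sub_im, Complex.ofReal_re, Complex.ofReal_im,
    Complex.I_re, Complex.I_im]
  ring

/-- No rotation `Ψ` of the plane `(i, j)` gives `f (V G(i,j,Ψ))` a value above `m`. The bound `m` is
independent of `V`, so that for fixed `m` this is a closed condition on `V`; maximality of the
`k`-th Jacobi update is the case `V = U_k`, `m = f (U_{k+1})`. -/
def RotationLE (f : Matrix (Fin n) (Fin n) ℂ → ℝ) (i j : Fin n) (m : ℝ)
    (V : Matrix (Fin n) (Fin n) ℂ) : Prop :=
  ∀ c s₁ s₂ : ℝ, c ^ 2 + s₁ ^ 2 + s₂ ^ 2 = 1 → f (V * planeG n i j (PsiM c s₁ s₂)) ≤ m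

lemma RotationLE.le {m : ℝ} (h : RotationLE f i j m V) (hij : i ≠ j) : f V ≤ m := by
  simpa [PsiM_one_zero_zero, planeG_one hij] using h 1 0 0 (by norm_num)

lemma isClosed_setOf_rotationLE (hf : Continuous f) (i j : Fin n) (m : ℝ) :
    IsClosed {V | RotationLE f i j m V} := by
  simp only [RotationLE, Set.ofPred_forall]
  exact isClosed_iInter fun c => isClosed_iInter fun s₁ => isClosed_iInter fun s₂ =>
    isClosed_iInter fun _ => isClosed_le (by fun_prop) continuous_const

lemma RotationLE.reInner_submatrix_eq_zero (h : RotationLE f i j (f V) V) (hg : IsGradC f g)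
    (hf : DifferentiableAt ℝ f V) (hij : i ≠ j) {x y : ℝ} (hxy : x ^ 2 + y ^ 2 = 1) :
    reInner ((Vᴴ * g V).submatrix ![i, j] ![i, j]) (PsiM 0 x y) = 0 := by
  rw [← reInner_planeInclusion_mul_mul]
  refine hg.reInner_eq_zero_of_forall_le hf ?_
    (hasDerivAt_planeG hij (hasDerivAt_PsiM_cos_sin x y)) fun τ => h _ _ _ ?_
  · simp [PsiM_one_zero_zero, planeG_one hij]
  · linear_combination Real.sin τ ^ 2 * hxy + Real.sin_sq_add_cos_sq τ

lemma RotationLE.isHermitian_submatrix (h : RotationLE f i j (f V) V) (hg : IsGradC f g)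
    (hf : DifferentiableAt ℝ f V) (hphase : PhaseInvariant f) (hij : i ≠ j) :
    ((Vᴴ * g V).submatrix ![i, j] ![i, j]).IsHermitian := by
  have hre := h.reInner_submatrix_eq_zero hg hf hij (x := 1) (y := 0) (by norm_num)
  have him := h.reInner_submatrix_eq_zero hg hf hij (x := 0) (y := 1) (by norm_num)
  have hdiag := hg.im_diag_eq_zero hf hphase
  rw [reInner_PsiM_zero] at hre him
  simp only [submatrix_apply, cons_val_zero, cons_val_one] at hre him
  refine IsHermitian.ext fun a b => ?_
  fin_cases a <;> fin_cases b <;> apply Complex.ext <;> simp [hdiag] <;> linarith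

end Rotation

section JacobiG

variable {n : ℕ} {f : Matrix (Fin n) (Fin n) ℂ → ℝ}
  {g : Matrix (Fin n) (Fin n) ℂ → Matrix (Fin n) (Fin n) ℂ} {δ : ℝ}

/-- The Jacobi-G gradient inequality `δ ‖ProjGrad f(V)‖ ≤ ‖ProjGrad h^{ij}_V(I₂)‖`, with the
gradient of `h^{ij}_V` at `I₂` written as the `(i,j)` block of `Vᴴ ∇f(V)`. -/
def GradientInequality (g : Matrix (Fin n) (Fin n) ℂ → Matrix (Fin n) (Fin n) ℂ) (δ : ℝ)
    (i j : Fin n) (V : Matrix (Fin n) (Fin n) ℂ) : Prop :=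
  let S := (Vᴴ * g V).submatrix ![i, j] ![i, j]
  δ * frobC (projGradC g V) ≤ frobC ((1 / 2 : ℂ) • (S - Sᴴ))

lemma isClosed_setOf_gradientInequality (hg : Continuous g) (δ : ℝ) (i j : Fin n) :
    IsClosed {V | GradientInequality g δ i j V} := by
  have hproj := continuous_projGradC hg
  simp only [GradientInequality, frobC_eq_norm]
  exact isClosed_le (by fun_prop) (by fun_prop)

lemma GradientInequality.projGradC_eq_zero {i j : Fin n} {V : Matrix (Fin n) (Fin n) ℂ}
    (h : GradientInequality g δ i j V) (hδ : 0 < δ)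
    (hS : ((Vᴴ * g V).submatrix ![i, j] ![i, j]).IsHermitian) : projGradC g V = 0 := by
  simp only [GradientInequality, hS.eq, sub_self, smul_zero, frobC_eq_norm, norm_zero] at h
  exact norm_le_zero_iff.1 (nonpos_of_mul_nonpos_right h hδ)

theorem jacobiG_unitary_accumulation_stationary_general (hf : ContDiff ℝ 1 f)
    (hphase : PhaseInvariant f) (hg : IsGradC f g) (hδ : 0 < δ)
    {U : ℕ → Matrix (Fin n) (Fin n) ℂ} {i j : ℕ → Fin n} (hij : ∀ k, i k ≠ j k)
    (hpair : ∀ k, ∃ gh, IsPlaneGradC f (U k) (i k) (j k) gh ∧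
      δ * frobC (projGradC g (U k)) ≤ frobC ((1 / 2 : ℂ) • (gh - ghᴴ)))
    (hmax : ∀ k, RotationLE f (i k) (j k) (f (U (k + 1))) (U k))
    {Us : Matrix (Fin n) (Fin n) ℂ} (hacc : MapClusterPt Us atTop U) :
    projGradC g Us = 0 := by
  have hdiff := hf.differentiable one_ne_zero
  have hmono : Monotone (f ∘ U) := monotone_nat_of_le_succ fun k => (hmax k).le (hij k)
  have hle (k : ℕ) : f (U k) ≤ f Us :=
    isClosed_Ici.mem_of_mapClusterPt (hacc.continuousAt_comp hf.continuous.continuousAt)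
      ((eventually_ge_atTop k).mono fun _ hk => hmono hk)
  let C (p : {p : Fin n × Fin n // p.1 ≠ p.2}) : Set (Matrix (Fin n) (Fin n) ℂ) :=
    {V | RotationLE f p.1.1 p.1.2 (f Us) V} ∩ {V | GradientInequality g δ p.1.1 p.1.2 V}
  have hclosed : IsClosed (⋃ p, C p) := isClosed_iUnion_of_finite fun p =>
    (isClosed_setOf_rotationLE hf.continuous _ _ _).inter
      (isClosed_setOf_gradientInequality (hg.continuous hf) δ _ _)
  have hcover (k : ℕ) : U k ∈ ⋃ p, C p := by
    obtain ⟨gh, hgh, hineq⟩ := hpair k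
    rw [hgh.eq_submatrix hg (hdiff _) (hij k)] at hineq
    exact Set.mem_iUnion.2 ⟨⟨(i k, j k), hij k⟩,
      fun c s₁ s₂ h => (hmax k c s₁ s₂ h).trans (hle (k + 1)), hineq⟩
  obtain ⟨⟨p, hp⟩, hrot, hineq⟩ :=
    Set.mem_iUnion.1 (hclosed.mem_of_mapClusterPt hacc (Eventually.of_forall hcover))
  exact hineq.projGradC_eq_zero hδ (hrot.isHermitian_submatrix hg (hdiff Us) hphase hp)

end JacobiG

section Cost

variable {ι κ : Type*} [Fintype ι]

/-- The diagonal entry `W(U)_{k⋯k}` of the order-`d` tensor `A` contracted in its first `t` modes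
with `conj U` and in the others with `U`. -/
noncomputable def contractedDiag {d : ℕ} (t : ℕ) (A : (Fin d → ι) → ℂ) (k : κ)
    (U : Matrix ι κ ℂ) : ℂ :=
  ∑ a : Fin d → ι, A a *
    ∏ p : Fin d, (if (p : ℕ) < t then (starRingEnd ℂ) (U (a p) k) else U (a p) k)

lemma contractedDiag_mul_diagonal [Fintype κ] [DecidableEq κ] {d : ℕ} (t : ℕ)
    (A : (Fin d → ι) → ℂ) (k : κ) (U : Matrix ι κ ℂ) (w : κ → ℂ) :
    contractedDiag t A k (U * diagonal w) = contractedDiag t A k U *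
      ∏ p : Fin d, (if (p : ℕ) < t then (starRingEnd ℂ) (w k) else w k) := by
  simp only [contractedDiag, Finset.sum_mul, mul_assoc, ← Finset.prod_mul_distrib]
  refine Finset.sum_congr rfl fun a _ => congrArg (A a * ·) (Finset.prod_congr rfl fun p _ => ?_)
  split_ifs <;> simp only [mul_diagonal, map_mul]

lemma phaseInvariant_normSq_contractedDiag [Fintype κ] [DecidableEq κ] {d : ℕ} (t : ℕ)
    (A : (Fin d → ι) → ℂ) (k : κ) :
    PhaseInvariant fun U : Matrix ι κ ℂ => Complex.normSq (contractedDiag t A k U) := by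
  intro U w hw
  have hprod : ‖∏ p : Fin d, (if (p : ℕ) < t then (starRingEnd ℂ) (w k) else w k)‖ = 1 := by
    rw [norm_prod]
    refine Finset.prod_eq_one fun p _ => ?_
    split_ifs <;> simp [hw]
  simp only [contractedDiag_mul_diagonal, Complex.normSq_eq_norm_sq, norm_mul, hprod, mul_one]

lemma contDiff_normSq_contractedDiag [Fintype κ] {d : ℕ} (t : ℕ) (A : (Fin d → ι) → ℂ) (k : κ)
    {r : WithTop ℕ∞} :
    ContDiff ℝ r fun U : Matrix ι κ ℂ => Complex.normSq (contractedDiag t A k U) := by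
  have hentry (a : ι) : ContDiff ℝ r fun U : Matrix ι κ ℂ => U a k :=
    (entryLinearMap ℝ ℂ a k).toContinuousLinearMap.contDiff
  simp only [Complex.normSq_eq_norm_sq]
  refine ContDiff.norm_sq ℝ <| ContDiff.sum fun a _ =>
    contDiff_const.mul <| contDiff_prod fun p _ => ?_
  split_ifs
  · exact Complex.conjCLE.contDiff.comp (hentry _)
  · exact hentry _

/-- The cost function `Σ_ℓ α_ℓ Σ_k |W^(ℓ)(U)_{k⋯k}|²` of simultaneous tensor diagonalization. -/
noncomputable def diagonalizationCost [Fintype κ] {L : ℕ} (d t : Fin L → ℕ) (α : Fin L → ℝ)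
    (A : (ℓ : Fin L) → (Fin (d ℓ) → ι) → ℂ) (U : Matrix ι κ ℂ) : ℝ :=
  ∑ ℓ, α ℓ * ∑ k, Complex.normSq (contractedDiag (t ℓ) (A ℓ) k U)

variable [Fintype κ] {L : ℕ} (d t : Fin L → ℕ) (α : Fin L → ℝ)
  (A : (ℓ : Fin L) → (Fin (d ℓ) → ι) → ℂ)

lemma phaseInvariant_diagonalizationCost [DecidableEq κ] :
    PhaseInvariant (diagonalizationCost (κ := κ) d t α A) := fun U w hw =>
  Finset.sum_congr rfl fun ℓ _ => congrArg (α ℓ * ·) <| Finset.sum_congr rfl fun k _ =>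
    phaseInvariant_normSq_contractedDiag (t ℓ) (A ℓ) k U w hw

lemma contDiff_diagonalizationCost {r : WithTop ℕ∞} :
    ContDiff ℝ r (diagonalizationCost (κ := κ) d t α A) :=
  ContDiff.sum fun ℓ _ => contDiff_const.mul <| ContDiff.sum fun k _ =>
    contDiff_normSq_contractedDiag (t ℓ) (A ℓ) k

end Cost

end

/-- Weak convergence of the Jacobi-G algorithm on U(n) for the ICA cost function
`f(U) = Σ_ℓ α_ℓ Σ_k |W^(ℓ)(U)_{k⋯k}|²`, where
`W^(ℓ)(U)_{k₁⋯k_{d_ℓ}} = Σ_a A^(ℓ)_a Π_{p<t_ℓ} conj(U_{a_p k_p}) Π_{p≥t_ℓ} U_{a_p k_p}`: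
every accumulation point of the iterates is a stationary point of `f` on U(n). -/
theorem jacobiG_unitary_accumulation_stationary {n L : ℕ}
    (d t : Fin L → ℕ) (htd : ∀ ℓ, t ℓ ≤ d ℓ) (hd : ∀ ℓ, 1 ≤ d ℓ)
    (α : Fin L → ℝ)
    (A : (ℓ : Fin L) → ((Fin (d ℓ) → Fin n) → ℂ))
    (f : Matrix (Fin n) (Fin n) ℂ → ℝ)
    (hf : ∀ U : Matrix (Fin n) (Fin n) ℂ, f U =
      ∑ ℓ, α ℓ * ∑ k : Fin n, Complex.normSq
        (∑ a : Fin (d ℓ) → Fin n, A ℓ a *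
          ∏ p : Fin (d ℓ), (if (p : ℕ) < t ℓ then (starRingEnd ℂ) (U (a p) k)
            else U (a p) k)))
    (g : Matrix (Fin n) (Fin n) ℂ → Matrix (Fin n) (Fin n) ℂ)
    (hg : IsGradC f g)
    (δ : ℝ) (hδ0 : 0 < δ) (hδn : δ < Real.sqrt 2 / (n : ℝ))
    (U : ℕ → Matrix (Fin n) (Fin n) ℂ) (hU0 : (U 0)ᴴ * U 0 = 1)
    (i j : ℕ → Fin n) (c s₁ s₂ : ℕ → ℝ)
    (hij : ∀ k, i k < j k)
    (hparam : ∀ k, (c k) ^ 2 + (s₁ k) ^ 2 + (s₂ k) ^ 2 = 1)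
    (hupd : ∀ k, U (k + 1) = U k * planeG n (i k) (j k) (PsiM (c k) (s₁ k) (s₂ k)))
    (hpair : ∀ k, ∃ gh : Matrix (Fin 2) (Fin 2) ℂ,
      (∀ H : Matrix (Fin 2) (Fin 2) ℂ,
        HasDerivAt (fun τ : ℝ => f (U k * planeG n (i k) (j k) (1 + τ • H)))
          (∑ a, ∑ b, ((starRingEnd ℂ) (gh a b) * H a b).re) 0) ∧
      δ * frobC (projGradC g (U k)) ≤ frobC ((1 / 2 : ℂ) • (gh - ghᴴ)))
    (hmax : ∀ k, ∀ c' s₁' s₂' : ℝ, c' ^ 2 + s₁' ^ 2 + s₂' ^ 2 = 1 →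
      f (U k * planeG n (i k) (j k) (PsiM c' s₁' s₂')) ≤ f (U (k + 1)))
    (Us : Matrix (Fin n) (Fin n) ℂ)
    (hacc : ∃ φ : ℕ → ℕ, StrictMono φ ∧
      Tendsto (fun m => frobC (U (φ m) - Us)) atTop (nhds 0)) :
    projGradC g Us = 0 := by
  obtain rfl : f = diagonalizationCost d t α A := funext hf
  obtain ⟨φ, hφ, hlim⟩ := hacc
  exact jacobiG_unitary_accumulation_stationary_general (contDiff_diagonalizationCost d t α A)
    (phaseInvariant_diagonalizationCost d t α A) hg hδ0 (fun k => (hij k).ne) hpair hmax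
    (mapClusterPt_of_tendsto_frobC_sub hφ hlim)
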